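/- Fix n_{⋆,1}, n_{⋆,2}, n_{⋆,3} ∈ ℤ² and reals N₁, N₂, N₃ ≥ 1, and let N_max ≥ N_med ≥ N_min be the nonincreasing rearrangement of (N₁,N₂,N₃). Let h : (ℤ²)⁴ → {0,1} be the tensor h_{n n₁ n₂ n₃} := 1 if n = n₁ − n₂ + n₃, n₂ ≠ n₁, n₂ ≠ n₃, and N_j ≤ ⟨n_j − n_{⋆,j}⟩ ≤ 2N_j for j = 1,2,3, and h_{n n₁ n₂ n₃} := 0 otherwise. Then there is a universal constant C > 0, independent of n_{⋆,1}, n_{⋆,2}, n_{⋆,3} and of N₁, N₂, N₃, such that ‖h‖₁ ≤ C · N_max · N_med, where ‖h‖₁ := max( ‖h‖_{n→n₁n₂n₃}, ‖h‖_{n₁→nn₂n₃}, ‖h‖_{nn₂→n₁n₃}, ‖h‖_{nn₃→n₁n₂} ). -/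

import Mathlib

/-!
Every one of the four operator norms is estimated by Schur's test: for a matrix with entries of
modulus at most `1`, the squared `ℓ² → ℓ²` norm is at most the largest number of nonzero entries
in a row times the largest number of nonzero entries in a column (`schur_count`).

The counting uses that the relation `n = n₁ - n₂ + n₃` determines any one of the four indices from
the other three, and that `⟨n_j - n_{⋆,j}⟩ ≤ 2 N_j` leaves at most `25 N_j²` choices for `n_j`
(`mem_boxAt`, `card_boxAt`). With `i ≠ j` depending on the grouping, the product of the two counts
is at most `(25 N_i N_j)²`, and `N_i N_j ≤ N_max N_med` for any two distinct indices.
-/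

noncomputable section

open scoped ENNReal

/-- `⟨n⟩² = 1 + |n|²` for `n ∈ ℤ²`. -/
def jbSq (n : ℤ × ℤ) : ℝ := 1 + (n.1 : ℝ) ^ 2 + (n.2 : ℝ) ^ 2

/-- `⟨n⟩` for `n ∈ ℤ²`. -/
def jbZ (n : ℤ × ℤ) : ℝ := Real.sqrt (jbSq n)

/-- `⟨n⟩² = 1 + |n|²` as an integer. -/
def jbSqInt (n : ℤ × ℤ) : ℤ := 1 + n.1 ^ 2 + n.2 ^ 2

/-- The Schrödinger phase `κ(n,n₁,n₂,n₃) = ⟨n⟩² − ⟨n₁⟩² + ⟨n₂⟩² − ⟨n₃⟩²`. -/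
def kappa (n n₁ n₂ n₃ : ℤ × ℤ) : ℤ :=
  jbSqInt n - jbSqInt n₁ + jbSqInt n₂ - jbSqInt n₃

/-- The base tensor `h_{n n₁ n₂ n₃}`: the indicator (with values in `{0,1}`) of
`n = n₁ − n₂ + n₃`, `n₂ ≠ n₁`, `n₂ ≠ n₃` and `N_j ≤ ⟨n_j − n_{⋆,j}⟩ ≤ 2N_j`, `j = 1,2,3`. -/
def hTensor (a₁ a₂ a₃ : ℤ × ℤ) (N₁ N₂ N₃ : ℝ) (n n₁ n₂ n₃ : ℤ × ℤ) : ℂ :=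
  if n = n₁ - n₂ + n₃ ∧ n₂ ≠ n₁ ∧ n₂ ≠ n₃ ∧
      N₁ ≤ jbZ (n₁ - a₁) ∧ jbZ (n₁ - a₁) ≤ 2 * N₁ ∧
      N₂ ≤ jbZ (n₂ - a₂) ∧ jbZ (n₂ - a₂) ≤ 2 * N₂ ∧
      N₃ ≤ jbZ (n₃ - a₃) ∧ jbZ (n₃ - a₃) ≤ 2 * N₃
  then 1 else 0

/-- The tensor `h^m = h · 1[κ = m]`, supported on a fixed value `m` of the phase `κ`. -/
def hTensorK (a₁ a₂ a₃ : ℤ × ℤ) (N₁ N₂ N₃ : ℝ) (m : ℤ) (n n₁ n₂ n₃ : ℤ × ℤ) : ℂ :=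
  if kappa n n₁ n₂ n₃ = m then hTensor a₁ a₂ a₃ N₁ N₂ N₃ n n₁ n₂ n₃ else 0

/-- The `ℓ²((ℤ²)^B) → ℓ²((ℤ²)^C)` operator norm for the grouping `n → n₁n₂n₃`. -/
def opNorm_n (h : (ℤ × ℤ) → (ℤ × ℤ) → (ℤ × ℤ) → (ℤ × ℤ) → ℂ) : ℝ≥0∞ :=
  (⨆ (f : (ℤ × ℤ) → ℂ) (_ : (∑' n : ℤ × ℤ, ‖f n‖ ^ 2) = 1),
    ∑' m : (ℤ × ℤ) × (ℤ × ℤ) × (ℤ × ℤ),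
      ENNReal.ofReal (‖∑' n : ℤ × ℤ, h n m.1 m.2.1 m.2.2 * f n‖ ^ 2)) ^ ((1 : ℝ) / 2)

/-- Operator norm for the grouping `n₁ → n n₂ n₃`. -/
def opNorm_n1 (h : (ℤ × ℤ) → (ℤ × ℤ) → (ℤ × ℤ) → (ℤ × ℤ) → ℂ) : ℝ≥0∞ :=
  (⨆ (f : (ℤ × ℤ) → ℂ) (_ : (∑' n₁ : ℤ × ℤ, ‖f n₁‖ ^ 2) = 1),
    ∑' m : (ℤ × ℤ) × (ℤ × ℤ) × (ℤ × ℤ),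
      ENNReal.ofReal (‖∑' n₁ : ℤ × ℤ, h m.1 n₁ m.2.1 m.2.2 * f n₁‖ ^ 2)) ^ ((1 : ℝ) / 2)

/-- Operator norm for the grouping `n n₂ → n₁ n₃`. -/
def opNorm_nn2 (h : (ℤ × ℤ) → (ℤ × ℤ) → (ℤ × ℤ) → (ℤ × ℤ) → ℂ) : ℝ≥0∞ :=
  (⨆ (f : (ℤ × ℤ) × (ℤ × ℤ) → ℂ) (_ : (∑' q : (ℤ × ℤ) × (ℤ × ℤ), ‖f q‖ ^ 2) = 1),
    ∑' m : (ℤ × ℤ) × (ℤ × ℤ),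
      ENNReal.ofReal (‖∑' q : (ℤ × ℤ) × (ℤ × ℤ), h q.1 m.1 q.2 m.2 * f q‖ ^ 2)) ^ ((1 : ℝ) / 2)

/-- Operator norm for the grouping `n n₃ → n₁ n₂`. -/
def opNorm_nn3 (h : (ℤ × ℤ) → (ℤ × ℤ) → (ℤ × ℤ) → (ℤ × ℤ) → ℂ) : ℝ≥0∞ :=
  (⨆ (f : (ℤ × ℤ) × (ℤ × ℤ) → ℂ) (_ : (∑' q : (ℤ × ℤ) × (ℤ × ℤ), ‖f q‖ ^ 2) = 1),
    ∑' m : (ℤ × ℤ) × (ℤ × ℤ),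
      ENNReal.ofReal (‖∑' q : (ℤ × ℤ) × (ℤ × ℤ), h q.1 m.1 m.2 q.2 * f q‖ ^ 2)) ^ ((1 : ℝ) / 2)

/-- Operator norm for the grouping `n n₁ → n₂ n₃`. -/
def opNorm_nn1 (h : (ℤ × ℤ) → (ℤ × ℤ) → (ℤ × ℤ) → (ℤ × ℤ) → ℂ) : ℝ≥0∞ :=
  (⨆ (f : (ℤ × ℤ) × (ℤ × ℤ) → ℂ) (_ : (∑' q : (ℤ × ℤ) × (ℤ × ℤ), ‖f q‖ ^ 2) = 1),
    ∑' m : (ℤ × ℤ) × (ℤ × ℤ),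
      ENNReal.ofReal (‖∑' q : (ℤ × ℤ) × (ℤ × ℤ), h q.1 q.2 m.1 m.2 * f q‖ ^ 2)) ^ ((1 : ℝ) / 2)

/-- The norm `‖h‖₁ = max( ‖h‖_{n→n₁n₂n₃}, ‖h‖_{n₁→nn₂n₃}, ‖h‖_{nn₂→n₁n₃}, ‖h‖_{nn₃→n₁n₂} )`. -/
def tNorm1 (h : (ℤ × ℤ) → (ℤ × ℤ) → (ℤ × ℤ) → (ℤ × ℤ) → ℂ) : ℝ≥0∞ :=
  max (max (opNorm_n h) (opNorm_n1 h)) (max (opNorm_nn2 h) (opNorm_nn3 h))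

/-- The norm `‖h‖₂ = max( ‖h‖_{n→n₁n₂n₃}, ‖h‖_{nn₁→n₂n₃} )`. -/
def tNorm2 (h : (ℤ × ℤ) → (ℤ × ℤ) → (ℤ × ℤ) → (ℤ × ℤ) → ℂ) : ℝ≥0∞ :=
  max (opNorm_n h) (opNorm_nn1 h)

/-! ### Schur's test -/

/-- **Schur's test**, in counting form: if `K` has entries of modulus at most `1`, at most `P`
nonzero entries for each fixed `b` and at most `Q` for each fixed `a`, then `f ↦ ∑ₐ K a b f a` has
squared `ℓ²` operator norm at most `P Q`. -/
theorem schur_count {α β : Type*} (K : α → β → ℂ) (P Q : ℝ) (hP : 0 ≤ P)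
    (hK : ∀ a b, ‖K a b‖ ≤ 1)
    (hcol : ∀ b, ∃ s : Finset α, (∀ a, K a b ≠ 0 → a ∈ s) ∧ (s.card : ℝ) ≤ P)
    (hrow : ∀ a, ∃ s : Finset β, (∀ b, K a b ≠ 0 → b ∈ s) ∧ (s.card : ℝ) ≤ Q)
    (f : α → ℂ) (hf : (∑' a, ‖f a‖ ^ 2) = 1) :
    ∑' b, ENNReal.ofReal (‖∑' a, K a b * f a‖ ^ 2) ≤ ENNReal.ofReal (P * Q) := by
  classical
  -- A divergent real series has `tsum` equal to `0`, so `hf` forces summability.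
  have hs : Summable (fun a => ‖f a‖ ^ 2) := by
    by_contra h
    rw [tsum_eq_zero_of_not_summable h] at hf
    exact zero_ne_one hf
  have hf' : ∑' a, ENNReal.ofReal (‖f a‖ ^ 2) = 1 := by
    rw [← ENNReal.ofReal_tsum_of_nonneg (fun a => by positivity) hs, hf, ENNReal.ofReal_one]
  -- Cauchy–Schwarz on the support of the `b`-th column.
  have h1 : ∀ b, ENNReal.ofReal (‖∑' a, K a b * f a‖ ^ 2) ≤
      ENNReal.ofReal P * ∑' a, if K a b ≠ 0 then ENNReal.ofReal (‖f a‖ ^ 2) else 0 := by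
    intro b
    obtain ⟨s, hsup, hcard⟩ := hcol b
    have e1 : ∑' a, K a b * f a = ∑ a ∈ s, K a b * f a := by
      refine tsum_eq_sum fun a ha => ?_
      have : K a b = 0 := by
        by_contra h
        exact ha (hsup a h)
      rw [this, zero_mul]
    have e2 : (∑' a, if K a b ≠ 0 then ENNReal.ofReal (‖f a‖ ^ 2) else 0)
        = ENNReal.ofReal (∑ a ∈ s, if K a b ≠ 0 then ‖f a‖ ^ 2 else 0) := by
      rw [tsum_eq_sum (s := s), ENNReal.ofReal_sum_of_nonneg]
      · refine Finset.sum_congr rfl fun a _ => ?_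
        split_ifs <;> simp
      · intro a _
        split_ifs <;> positivity
      · intro a ha
        rw [if_neg fun h => ha (hsup a h)]
    rw [e1, e2, ← ENNReal.ofReal_mul hP]
    refine ENNReal.ofReal_le_ofReal ?_
    calc ‖∑ a ∈ s, K a b * f a‖ ^ 2 ≤ (∑ a ∈ s, ‖K a b * f a‖) ^ 2 := by
          gcongr
          exact norm_sum_le _ _
      _ ≤ s.card * ∑ a ∈ s, ‖K a b * f a‖ ^ 2 := sq_sum_le_card_mul_sum_sq
      _ ≤ P * ∑ a ∈ s, if K a b ≠ 0 then ‖f a‖ ^ 2 else 0 := by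
          gcongr with a _
          split_ifs with h
          · rw [norm_mul]
            gcongr
            exact mul_le_of_le_one_left (norm_nonneg _) (hK a b)
          · simp [not_not.1 h]
  have h2 : ∀ a, (∑' b, if K a b ≠ 0 then ENNReal.ofReal (‖f a‖ ^ 2) else 0) ≤
      ENNReal.ofReal Q * ENNReal.ofReal (‖f a‖ ^ 2) := by
    intro a
    obtain ⟨s, hsup, hcard⟩ := hrow a
    rw [tsum_eq_sum (s := s) (fun b hb => if_neg fun h => hb (hsup b h))]
    calc _ ≤ ∑ b ∈ s, ENNReal.ofReal (‖f a‖ ^ 2) := by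
          refine Finset.sum_le_sum fun b _ => ?_
          split_ifs
          · exact le_rfl
          · exact zero_le
      _ = ENNReal.ofReal s.card * ENNReal.ofReal (‖f a‖ ^ 2) := by
          rw [Finset.sum_const, nsmul_eq_mul, ENNReal.ofReal_natCast]
      _ ≤ _ := by gcongr
  calc _ ≤ ∑' b, ENNReal.ofReal P *
          ∑' a, (if K a b ≠ 0 then ENNReal.ofReal (‖f a‖ ^ 2) else 0) := ENNReal.tsum_le_tsum h1
    _ = ENNReal.ofReal P * ∑' a, ∑' b, (if K a b ≠ 0 then ENNReal.ofReal (‖f a‖ ^ 2) else 0) := by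
        rw [ENNReal.tsum_mul_left, ENNReal.tsum_comm]
    _ ≤ ENNReal.ofReal P * ∑' a, ENNReal.ofReal Q * ENNReal.ofReal (‖f a‖ ^ 2) := by
        gcongr with a
        exact h2 a
    _ = ENNReal.ofReal (P * Q) := by
        rw [ENNReal.tsum_mul_left, hf', mul_one, ENNReal.ofReal_mul hP]

/-! ### Counting lattice points in the support of the tensor -/

/-- The square of lattice points within sup-distance `⌊2N⌋` of `a`. -/
def boxAt (a : ℤ × ℤ) (N : ℝ) : Finset (ℤ × ℤ) :=
  Finset.Icc (a.1 - ⌊2 * N⌋) (a.1 + ⌊2 * N⌋) ×ˢ Finset.Icc (a.2 - ⌊2 * N⌋) (a.2 + ⌊2 * N⌋)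

theorem mem_boxAt {a n : ℤ × ℤ} {N : ℝ} (h : jbZ (n - a) ≤ 2 * N) : n ∈ boxAt a N := by
  have key : ∀ x : ℤ, (x : ℝ) ^ 2 ≤ jbSq (n - a) → -⌊2 * N⌋ ≤ x ∧ x ≤ ⌊2 * N⌋ := by
    intro x hx
    have h1 : |(x : ℝ)| ≤ 2 * N := (Real.abs_le_sqrt hx).trans h
    have h2 : |x| ≤ ⌊2 * N⌋ := Int.le_floor.2 (by rwa [Int.cast_abs])
    exact abs_le.1 h2
  have k1 := key (n.1 - a.1) (by
    simp only [jbSq, Prod.fst_sub, Prod.snd_sub]; nlinarith [sq_nonneg ((n.2 - a.2 : ℤ) : ℝ)])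
  have k2 := key (n.2 - a.2) (by
    simp only [jbSq, Prod.fst_sub, Prod.snd_sub]; nlinarith [sq_nonneg ((n.1 - a.1 : ℤ) : ℝ)])
  simp only [boxAt, Finset.mem_product, Finset.mem_Icc]
  omega

theorem card_boxAt (a : ℤ × ℤ) {N : ℝ} (hN : 1 ≤ N) : ((boxAt a N).card : ℝ) ≤ 25 * N ^ 2 := by
  have h0 : 0 ≤ ⌊2 * N⌋ := Int.floor_nonneg.2 (by linarith)
  have key : ∀ x : ℤ, ((Finset.Icc (x - ⌊2 * N⌋) (x + ⌊2 * N⌋)).card : ℝ) ≤ 5 * N := by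
    intro x
    have e : ((Finset.Icc (x - ⌊2 * N⌋) (x + ⌊2 * N⌋)).card : ℤ) = 2 * ⌊2 * N⌋ + 1 := by
      rw [Int.card_Icc]; omega
    have e' : ((Finset.Icc (x - ⌊2 * N⌋) (x + ⌊2 * N⌋)).card : ℝ) = 2 * (⌊2 * N⌋ : ℝ) + 1 := by
      exact_mod_cast e
    rw [e']
    linarith [Int.floor_le (2 * N)]
  rw [boxAt, Finset.card_product]
  push_cast
  calc _ ≤ (5 * N) * (5 * N) := by
        gcongr
        · exact key _
        · exact key _
    _ = _ := by ring

theorem hTensor_norm_le (a₁ a₂ a₃ : ℤ × ℤ) (N₁ N₂ N₃ : ℝ) (n n₁ n₂ n₃ : ℤ × ℤ) :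
    ‖hTensor a₁ a₂ a₃ N₁ N₂ N₃ n n₁ n₂ n₃‖ ≤ 1 := by
  unfold hTensor
  split_ifs <;> simp

/-- The part of the support condition that the counting uses. -/
theorem hTensor_supp {a₁ a₂ a₃ : ℤ × ℤ} {N₁ N₂ N₃ : ℝ} {n n₁ n₂ n₃ : ℤ × ℤ}
    (h : hTensor a₁ a₂ a₃ N₁ N₂ N₃ n n₁ n₂ n₃ ≠ 0) :
    n = n₁ - n₂ + n₃ ∧ n₁ ∈ boxAt a₁ N₁ ∧ n₂ ∈ boxAt a₂ N₂ ∧ n₃ ∈ boxAt a₃ N₃ := by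
  unfold hTensor at h
  split_ifs at h with h'
  · obtain ⟨h1, -, -, -, h2, -, h3, -, h4⟩ := h'
    exact ⟨h1, mem_boxAt h2, mem_boxAt h3, mem_boxAt h4⟩
  · exact absurd rfl h

/-! ### The operator norm bound -/

/-- Passing from a bound on the squared norm of each image to a bound on the operator norm. -/
theorem rpow_half_iSup_le {ι : Type*} {p : ι → Prop} {F : ι → ℝ≥0∞} {P Q B : ℝ} (hB : 0 ≤ B)
    (hPQ : P * Q ≤ B ^ 2) (h : ∀ i, p i → F i ≤ ENNReal.ofReal (P * Q)) :
    (⨆ (i : ι) (_ : p i), F i) ^ ((1 : ℝ) / 2) ≤ ENNReal.ofReal B := by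
  have h1 : (⨆ (i : ι) (_ : p i), F i) ≤ ENNReal.ofReal (B ^ 2) :=
    iSup₂_le fun i hi => (h i hi).trans (ENNReal.ofReal_le_ofReal hPQ)
  calc _ ≤ (ENNReal.ofReal (B ^ 2)) ^ ((1 : ℝ) / 2) := by gcongr
    _ = ENNReal.ofReal B := by
        rw [ENNReal.ofReal_rpow_of_nonneg (by positivity) (by norm_num), ← Real.sqrt_eq_rpow,
          Real.sqrt_sq hB]

/-- The product of any two of the three sizes is at most `N_max N_med`. -/
theorem mul_le_max_mul_med {x y z : ℝ} (hx : 1 ≤ x) (hy : 1 ≤ y) (hz : 1 ≤ z) :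
    x * y ≤ max x (max y z) * (x + y + z - max x (max y z) - min x (min y z)) ∧
    y * z ≤ max x (max y z) * (x + y + z - max x (max y z) - min x (min y z)) ∧
    z * x ≤ max x (max y z) * (x + y + z - max x (max y z) - min x (min y z)) := by
  rcases le_total x y with h1 | h1 <;> rcases le_total y z with h2 | h2 <;>
    rcases le_total x z with h3 | h3 <;> simp only [max_eq_left, max_eq_right, min_eq_left,
      min_eq_right, h1, h2, h3] <;> refine ⟨?_, ?_, ?_⟩ <;> nlinarith

/-- Lemma 4.2 (i): `‖h‖₁ ≲ N_max N_med`, uniformly in the centers and the dyadic sizes. -/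
theorem tensor_bound_I_i :
    ∃ C > (0 : ℝ), ∀ (a₁ a₂ a₃ : ℤ × ℤ) (N₁ N₂ N₃ : ℝ),
      1 ≤ N₁ → 1 ≤ N₂ → 1 ≤ N₃ →
      tNorm1 (hTensor a₁ a₂ a₃ N₁ N₂ N₃)
        ≤ ENNReal.ofReal
            (C * max N₁ (max N₂ N₃) *
              (N₁ + N₂ + N₃ - max N₁ (max N₂ N₃) - min N₁ (min N₂ N₃))) := by
  refine ⟨25, by norm_num, fun a₁ a₂ a₃ N₁ N₂ N₃ hN₁ hN₂ hN₃ => ?_⟩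
  obtain ⟨m12, m23, m31⟩ := mul_le_max_mul_med hN₁ hN₂ hN₃
  rw [mul_assoc]
  set M := max N₁ (max N₂ N₃) * (N₁ + N₂ + N₃ - max N₁ (max N₂ N₃) - min N₁ (min N₂ N₃))
  have hM : 0 ≤ 25 * M := by nlinarith
  have sq_le : ∀ {x y : ℝ}, 1 ≤ x → 1 ≤ y → x * y ≤ M →
      (25 * x ^ 2) * (25 * y ^ 2) ≤ (25 * M) ^ 2 := fun {x y} hx hy h => by
    calc (25 * x ^ 2) * (25 * y ^ 2) = (25 * (x * y)) ^ 2 := by ring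
      _ ≤ (25 * M) ^ 2 := by gcongr
  have card1 : ∀ {γ : Type} [DecidableEq γ] (g : ℤ × ℤ → γ) (a : ℤ × ℤ) {N : ℝ}, 1 ≤ N →
      (((boxAt a N).image g).card : ℝ) ≤ 25 * N ^ 2 := fun {γ} [_] g a {N} hN =>
    (Nat.cast_le.2 Finset.card_image_le).trans (card_boxAt a hN)
  have card2 : ∀ {γ : Type} [DecidableEq γ] (g : (ℤ × ℤ) × (ℤ × ℤ) → γ) (a a' : ℤ × ℤ)
      {N N' : ℝ}, 1 ≤ N → 1 ≤ N' →
      (((boxAt a N ×ˢ boxAt a' N').image g).card : ℝ) ≤ (25 * N ^ 2) * (25 * N' ^ 2) :=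
    fun {γ} [_] g a a' {N N'} hN hN' => by
      refine (Nat.cast_le.2 Finset.card_image_le).trans ?_
      rw [Finset.card_product, Nat.cast_mul]
      exact mul_le_mul (card_boxAt a hN) (card_boxAt a' hN') (by positivity) (by positivity)
  refine max_le (max_le ?_ ?_) (max_le ?_ ?_)
  -- `n → n₁n₂n₃`: given `n`, the pair `(n₁, n₂)` determines `n₃`.
  · refine rpow_half_iSup_le (P := 1) (Q := (25 * N₁ ^ 2) * (25 * N₂ ^ 2)) hM
      (by rw [one_mul]; exact sq_le hN₁ hN₂ m12) fun f hf => ?_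
    refine schur_count (fun n (m : (ℤ × ℤ) × (ℤ × ℤ) × (ℤ × ℤ)) =>
      hTensor a₁ a₂ a₃ N₁ N₂ N₃ n m.1 m.2.1 m.2.2) _ _ zero_le_one
      (fun _ _ => hTensor_norm_le ..) ?_ ?_ f hf
    · exact fun m => ⟨{m.1 - m.2.1 + m.2.2},
        fun n h => Finset.mem_singleton.2 (hTensor_supp h).1, by simp⟩
    · refine fun n => ⟨(boxAt a₁ N₁ ×ˢ boxAt a₂ N₂).image
        (fun p => (p.1, p.2, n - p.1 + p.2)), fun m h => ?_, card2 _ _ _ hN₁ hN₂⟩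
      obtain ⟨e, h1, h2, -⟩ := hTensor_supp h
      refine Finset.mem_image.2 ⟨(m.1, m.2.1), Finset.mk_mem_product h1 h2, ?_⟩
      ext1
      · rfl
      ext1
      · rfl
      · change n - m.1 + m.2.1 = m.2.2
        rw [e]; abel
  -- `n₁ → nn₂n₃`: given `n₁`, the pair `(n₂, n₃)` determines `n`.
  · refine rpow_half_iSup_le (P := 1) (Q := (25 * N₂ ^ 2) * (25 * N₃ ^ 2)) hM
      (by rw [one_mul]; exact sq_le hN₂ hN₃ m23) fun f hf => ?_
    refine schur_count (fun n₁ (m : (ℤ × ℤ) × (ℤ × ℤ) × (ℤ × ℤ)) =>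
      hTensor a₁ a₂ a₃ N₁ N₂ N₃ m.1 n₁ m.2.1 m.2.2) _ _ zero_le_one
      (fun _ _ => hTensor_norm_le ..) ?_ ?_ f hf
    · refine fun m => ⟨{m.1 + m.2.1 - m.2.2}, fun n₁ h => Finset.mem_singleton.2 ?_, by simp⟩
      rw [(hTensor_supp h).1]; abel
    · refine fun n₁ => ⟨(boxAt a₂ N₂ ×ˢ boxAt a₃ N₃).image
        (fun p => (n₁ - p.1 + p.2, p.1, p.2)), fun m h => ?_, card2 _ _ _ hN₂ hN₃⟩
      obtain ⟨e, -, h2, h3⟩ := hTensor_supp h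
      refine Finset.mem_image.2 ⟨(m.2.1, m.2.2), Finset.mk_mem_product h2 h3, ?_⟩
      ext1
      · exact e.symm
      · rfl
  -- `nn₂ → n₁n₃`: given `(n₁, n₃)`, `n₂` determines `n`; given `(n, n₂)`, `n₁` determines `n₃`.
  · refine rpow_half_iSup_le (P := 25 * N₂ ^ 2) (Q := 25 * N₁ ^ 2) hM
      (sq_le hN₂ hN₁ (by rwa [mul_comm])) fun f hf => ?_
    refine schur_count (fun (q : (ℤ × ℤ) × (ℤ × ℤ)) (m : (ℤ × ℤ) × (ℤ × ℤ)) =>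
      hTensor a₁ a₂ a₃ N₁ N₂ N₃ q.1 m.1 q.2 m.2) _ _ (by positivity)
      (fun _ _ => hTensor_norm_le ..) ?_ ?_ f hf
    · refine fun m => ⟨(boxAt a₂ N₂).image (fun n₂ => (m.1 - n₂ + m.2, n₂)),
        fun q h => ?_, card1 _ _ hN₂⟩
      obtain ⟨e, -, h2, -⟩ := hTensor_supp h
      exact Finset.mem_image.2 ⟨q.2, h2, Prod.ext e.symm rfl⟩
    · refine fun q => ⟨(boxAt a₁ N₁).image (fun n₁ => (n₁, q.1 - n₁ + q.2)),
        fun m h => ?_, card1 _ _ hN₁⟩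
      obtain ⟨e, h1, -, -⟩ := hTensor_supp h
      refine Finset.mem_image.2 ⟨m.1, h1, Prod.ext rfl ?_⟩
      change q.1 - m.1 + q.2 = m.2
      rw [e]; abel
  -- `nn₃ → n₁n₂`: given `(n₁, n₂)`, `n₃` determines `n`; given `(n, n₃)`, `n₁` determines `n₂`.
  · refine rpow_half_iSup_le (P := 25 * N₃ ^ 2) (Q := 25 * N₁ ^ 2) hM
      (sq_le hN₃ hN₁ m31) fun f hf => ?_
    refine schur_count (fun (q : (ℤ × ℤ) × (ℤ × ℤ)) (m : (ℤ × ℤ) × (ℤ × ℤ)) =>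
      hTensor a₁ a₂ a₃ N₁ N₂ N₃ q.1 m.1 m.2 q.2) _ _ (by positivity)
      (fun _ _ => hTensor_norm_le ..) ?_ ?_ f hf
    · refine fun m => ⟨(boxAt a₃ N₃).image (fun n₃ => (m.1 - m.2 + n₃, n₃)),
        fun q h => ?_, card1 _ _ hN₃⟩
      obtain ⟨e, -, -, h3⟩ := hTensor_supp h
      exact Finset.mem_image.2 ⟨q.2, h3, Prod.ext e.symm rfl⟩
    · refine fun q => ⟨(boxAt a₁ N₁).image (fun n₁ => (n₁, n₁ + q.2 - q.1)),
        fun m h => ?_, card1 _ _ hN₁⟩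
      obtain ⟨e, h1, -, -⟩ := hTensor_supp h
      refine Finset.mem_image.2 ⟨m.1, h1, Prod.ext rfl ?_⟩
      change m.1 + q.2 - q.1 = m.2
      rw [e]; abel
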